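/- arXiv:2001.04683 — 5 statements merged into one kernel-verified Lean document; each statement's English description precedes it below -/
import Mathlib

section
/- Let V be a finite type with at least 3 elements and let x, y, z, w be Hamiltonian cycles on V. Suppose that the characteristic vectors satisfy χ_z + χ_w = χ_x + χ_y (pointwise on Sym2 V) and that the unordered pair {z, w} is different from the unordered pair {x, y}. Then the closed segment joining χ_x and χ_y is NOT an extreme subset of the polytope TSP(V); in particular χ_x and χ_y are not adjacent vertices in the 1-skeleton of TSP(V). -/
open scoped Classical

/-- The characteristic vector of a simple graph `H` on `V`, as a function `Sym2 V → ℝ`. -/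
noncomputable def chiGraph {V : Type*} (H : SimpleGraph V) : Sym2 V → ℝ :=
  fun e => if e ∈ H.edgeSet then 1 else 0

/-- A Hamiltonian cycle on `V`: a connected simple graph in which every vertex has degree 2. -/
def IsHamiltonianCycleGraph {V : Type*} [Fintype V] (H : SimpleGraph V) : Prop :=
  H.Connected ∧ ∀ v : V, H.degree v = 2

/-- The symmetric traveling salesperson polytope: the convex hull of the characteristic
vectors of all Hamiltonian cycles on `V`. -/
noncomputable def TSPpolytope (V : Type*) [Fintype V] : Set (Sym2 V → ℝ) :=
  convexHull ℝ {f | ∃ H : SimpleGraph V, IsHamiltonianCycleGraph H ∧ f = chiGraph H}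

/-!
Since `χ_z + χ_w = χ_x + χ_y`, the segments `[χ_z, χ_w]` and `[χ_x, χ_y]` have the same midpoint.
If `[χ_x, χ_y]` were a face of the polytope, it would therefore contain `χ_z`. But `χ_z` is a
vertex of the unit cube, in which `χ_x` and `χ_y` also lie, so it must be one of the endpoints, and
then `χ_w` is the other one.
-/

section Convexity

variable {𝕜 E : Type*} [Field 𝕜] [LinearOrder 𝕜] [IsStrictOrderedRing 𝕜] [AddCommGroup E]
  [Module 𝕜 E] {A K : Set E} {x y z w : E}

theorem mem_segment_of_isExtreme_segment_of_add_eq_add (hA : IsExtreme 𝕜 A (segment 𝕜 x y))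
    (hz : z ∈ A) (hw : w ∈ A) (hsum : z + w = x + y) : z ∈ segment 𝕜 x y := by
  have same_midpoint : midpoint 𝕜 z w = midpoint 𝕜 x y := by
    rw [midpoint_eq_smul_add, midpoint_eq_smul_add, hsum]
  exact hA.left_mem_of_mem_openSegment hz hw (midpoint_mem_segment x y)
    (same_midpoint ▸ midpoint_mem_openSegment z w)

theorem endpoints_eq_of_isExtreme_segment_of_add_eq_add
    (hA : IsExtreme 𝕜 A (segment 𝕜 x y)) (hx : x ∈ K) (hy : y ∈ K)
    (hz : z ∈ K.extremePoints 𝕜) (hzA : z ∈ A) (hwA : w ∈ A) (hsum : z + w = x + y) :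
    (z = x ∧ w = y) ∨ (z = y ∧ w = x) := by
  have hz_segment := mem_segment_of_isExtreme_segment_of_add_eq_add hA hzA hwA hsum
  rcases (mem_extremePoints_iff_forall_segment.1 hz).2 x hx y hy hz_segment with rfl | rfl
  · exact .inl ⟨rfl, add_left_cancel hsum⟩
  · exact .inr ⟨rfl, add_left_cancel (hsum.trans (add_comm x y))⟩

end Convexity

theorem indicator_one_mem_extremePoints_Icc {ι : Type*} (s : Set ι) :
    s.indicator (1 : ι → ℝ) ∈ (Set.Icc (0 : ι → ℝ) 1).extremePoints ℝ := by
  rw [← Set.pi_univ_Icc, extremePoints_pi]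
  intro i _
  beta_reduce
  rw [Pi.zero_apply, Pi.one_apply, Set.extremePoints_Icc zero_le_one]
  exact Set.indicator_eq_zero_or_self s 1 i

section CharacteristicVector

variable {V : Type*}

theorem chiGraph_eq_indicator (H : SimpleGraph V) : chiGraph H = H.edgeSet.indicator 1 := by
  ext e
  simp only [chiGraph, Set.indicator_apply, Pi.one_apply]

theorem chiGraph_injective : Function.Injective (chiGraph (V := V)) := fun G H h =>
  SimpleGraph.edgeSet_injective <| Set.indicator_one_inj ℝ <| by
    rwa [← chiGraph_eq_indicator, ← chiGraph_eq_indicator]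

theorem chiGraph_mem_extremePoints_Icc (H : SimpleGraph V) :
    chiGraph H ∈ (Set.Icc (0 : Sym2 V → ℝ) 1).extremePoints ℝ :=
  chiGraph_eq_indicator H ▸ indicator_one_mem_extremePoints_Icc H.edgeSet

theorem chiGraph_mem_TSPpolytope [Fintype V] {H : SimpleGraph V}
    (hH : IsHamiltonianCycleGraph H) : chiGraph H ∈ TSPpolytope V :=
  subset_convexHull ℝ _ ⟨H, hH, rfl⟩

theorem stmt_0_general {A : Set (Sym2 V → ℝ)} {x y z w : SimpleGraph V}
    (hz : chiGraph z ∈ A) (hw : chiGraph w ∈ A)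
    (hsum : chiGraph z + chiGraph w = chiGraph x + chiGraph y)
    (hdiff : ¬ ((z = x ∧ w = y) ∨ (z = y ∧ w = x))) :
    ¬ IsExtreme ℝ A (segment ℝ (chiGraph x) (chiGraph y)) := by
  intro hA
  have endpoints_eq := endpoints_eq_of_isExtreme_segment_of_add_eq_add hA
    (extremePoints_subset (chiGraph_mem_extremePoints_Icc x))
    (extremePoints_subset (chiGraph_mem_extremePoints_Icc y))
    (chiGraph_mem_extremePoints_Icc z) hz hw hsum
  simp only [chiGraph_injective.eq_iff] at endpoints_eq
  exact hdiff endpoints_eq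

end CharacteristicVector

theorem stmt_0 {V : Type*} [Fintype V] (hV : 3 ≤ Fintype.card V)
    (x y z w : SimpleGraph V)
    (hx : IsHamiltonianCycleGraph x) (hy : IsHamiltonianCycleGraph y)
    (hz : IsHamiltonianCycleGraph z) (hw : IsHamiltonianCycleGraph w)
    (hsum : chiGraph z + chiGraph w = chiGraph x + chiGraph y)
    (hdiff : ¬ ((z = x ∧ w = y) ∨ (z = y ∧ w = x))) :
    ¬ IsExtreme ℝ (TSPpolytope V) (segment ℝ (chiGraph x) (chiGraph y)) :=
  stmt_0_general (chiGraph_mem_TSPpolytope hz) (chiGraph_mem_TSPpolytope hw) hsum hdiff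
end

section
/- Let V be a finite type with at least 3 elements and let σ, τ, π, ρ be cyclic permutations of V. Suppose that the characteristic vectors satisfy χ_π + χ_ρ = χ_σ + χ_τ (pointwise on V × V) and that the unordered pair {π, ρ} is different from the unordered pair {σ, τ}. Then the closed segment joining χ_σ and χ_τ is NOT an extreme subset of the polytope ATSP(V); in particular χ_σ and χ_τ are not adjacent vertices in the 1-skeleton of ATSP(V). -/
open scoped Classical

/-- The characteristic vector of a permutation `σ` of `V`, as a function `V × V → ℝ`. -/
noncomputable def chiPerm {V : Type*} (σ : Equiv.Perm V) : V × V → ℝ :=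
  fun p => if σ p.1 = p.2 then 1 else 0

/-- A cyclic permutation of `V`: a permutation that is a single cycle whose support
is all of `V`. -/
def IsCyclicPerm {V : Type*} [Fintype V] [DecidableEq V] (σ : Equiv.Perm V) : Prop :=
  σ.IsCycle ∧ σ.support = Finset.univ

/-- The asymmetric traveling salesperson polytope: the convex hull of the characteristic
vectors of all cyclic permutations of `V`. -/
noncomputable def ATSPpolytope (V : Type*) [Fintype V] [DecidableEq V] : Set (V × V → ℝ) :=
  convexHull ℝ {f | ∃ σ : Equiv.Perm V, IsCyclicPerm σ ∧ f = chiPerm σ}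

/-!
The midpoint of `χ_σ` and `χ_τ` is also the midpoint of `χ_π` and `χ_ρ`, so if the segment joining
`χ_σ` and `χ_τ` were extreme, it would contain `χ_π`. All these vectors lie in the unit cube, of
which `χ_π`, being a 0/1-vector, is an extreme point; hence `χ_π` would be an endpoint of the
segment, and cancelling it from `χ_π + χ_ρ = χ_σ + χ_τ` would identify the two pairs.
-/

section ExtremeSegment

variable {𝕜 E : Type*} [Field 𝕜] [LinearOrder 𝕜] [IsStrictOrderedRing 𝕜] [AddCommGroup E]
  [Module 𝕜 E] {A C : Set E} {p q x y : E}

theorem mem_segment_of_isExtreme_of_add_eq_add (hext : IsExtreme 𝕜 A (segment 𝕜 x y))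
    (hp : p ∈ A) (hq : q ∈ A) (hsum : p + q = x + y) : p ∈ segment 𝕜 x y := by
  have hmid : midpoint 𝕜 p q = midpoint 𝕜 x y := by
    simp only [midpoint_eq_smul_add, hsum]
  have hmem : midpoint 𝕜 p q ∈ segment 𝕜 x y := hmid ▸ midpoint_mem_segment x y
  exact hext.left_mem_of_mem_openSegment hp hq hmem (midpoint_mem_openSegment p q)

theorem eq_and_eq_or_eq_and_eq_of_isExtreme_segment (hext : IsExtreme 𝕜 A (segment 𝕜 x y))
    (hp : p ∈ A) (hq : q ∈ A) (hsum : p + q = x + y)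
    (hpC : p ∈ C.extremePoints 𝕜) (hx : x ∈ C) (hy : y ∈ C) :
    (p = x ∧ q = y) ∨ (p = y ∧ q = x) := by
  have hseg := mem_segment_of_isExtreme_of_add_eq_add hext hp hq hsum
  rcases (mem_extremePoints_iff_forall_segment.1 hpC).2 x hx y hy hseg with rfl | rfl
  · exact .inl ⟨rfl, add_left_cancel hsum⟩
  · exact .inr ⟨rfl, add_left_cancel (hsum.trans (add_comm _ _))⟩

end ExtremeSegment

section CharacteristicVector

variable {V : Type*}

theorem chiPerm_injective : Function.Injective (chiPerm (V := V)) := by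
  intro σ τ h
  ext v
  simpa [chiPerm] using congrFun h (v, τ v)

theorem chiPerm_mem_extremePoints_cube (σ : Equiv.Perm V) :
    chiPerm σ ∈ (Set.univ.pi fun _ : V × V => Set.Icc (0 : ℝ) 1).extremePoints ℝ := by
  rw [extremePoints_pi, Set.extremePoints_Icc zero_le_one]
  intro e _
  exact (ite_eq_or_eq (σ e.1 = e.2) 1 0).symm

theorem chiPerm_mem_ATSPpolytope [Fintype V] [DecidableEq V] {σ : Equiv.Perm V}
    (hσ : IsCyclicPerm σ) : chiPerm σ ∈ ATSPpolytope V :=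
  subset_convexHull ℝ _ ⟨σ, hσ, rfl⟩

end CharacteristicVector

theorem stmt_1_general {V : Type*} {A : Set (V × V → ℝ)} {σ τ π ρ : Equiv.Perm V}
    (hπ : chiPerm π ∈ A) (hρ : chiPerm ρ ∈ A)
    (hsum : chiPerm π + chiPerm ρ = chiPerm σ + chiPerm τ)
    (hdiff : ¬ ((π = σ ∧ ρ = τ) ∨ (π = τ ∧ ρ = σ))) :
    ¬ IsExtreme ℝ A (segment ℝ (chiPerm σ) (chiPerm τ)) := by
  intro hext
  have hends := eq_and_eq_or_eq_and_eq_of_isExtreme_segment hext hπ hρ hsum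
    (chiPerm_mem_extremePoints_cube π)
    (extremePoints_subset (chiPerm_mem_extremePoints_cube σ))
    (extremePoints_subset (chiPerm_mem_extremePoints_cube τ))
  simp only [chiPerm_injective.eq_iff] at hends
  exact hdiff hends

theorem stmt_1 {V : Type*} [Fintype V] [DecidableEq V] (hV : 3 ≤ Fintype.card V)
    (σ τ π ρ : Equiv.Perm V)
    (hσ : IsCyclicPerm σ) (hτ : IsCyclicPerm τ)
    (hπ : IsCyclicPerm π) (hρ : IsCyclicPerm ρ)
    (hsum : chiPerm π + chiPerm ρ = chiPerm σ + chiPerm τ)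
    (hdiff : ¬ ((π = σ ∧ ρ = τ) ∨ (π = τ ∧ ρ = σ))) :
    ¬ IsExtreme ℝ (ATSPpolytope V) (segment ℝ (chiPerm σ) (chiPerm τ)) :=
  stmt_1_general (chiPerm_mem_ATSPpolytope hπ) (chiPerm_mem_ATSPpolytope hρ) hsum hdiff
end

section
/- Let V be a finite type and let σ, τ, π be permutations of V such that for every v, π(v) = σ(v) or π(v) = τ(v). Define ρ : V → V by ρ(v) = τ(v) if π(v) = σ(v), and ρ(v) = σ(v) otherwise. Then ρ is a bijection (a permutation of V), and the characteristic vectors satisfy χ_σ + χ_τ = χ_π + χ_ρ. In other words, removing a vertex-disjoint directed cycle cover from the union multigraph of two directed cycle covers leaves another vertex-disjoint directed cycle cover. -/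
open scoped Classical

/-- The characteristic vector of a map `f : V → V`, as a function `V × V → ℝ`:
value 1 on the pair `(u, v)` iff `f u = v`. -/
noncomputable def chiMap {V : Type*} (f : V → V) : V × V → ℝ :=
  fun p => if f p.1 = p.2 then 1 else 0

/-!
Write `ρ` for the map taking the value that `π` leaves over, so that `{π v, ρ v} = {σ v, τ v}` as
unordered pairs for every `v`; the identity of characteristic vectors is this equality, read off
coordinatewise. A vertex `w` is entered by one `σ`-arc and one `τ`-arc, and `π` uses exactly one of
them, so `ρ` enters `w` exactly once, along the other.
-/

open Function

section UnorderedPairs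

variable {α β : Type*} {f g h k : α → β}

theorem injective_of_sym2_eq (hk : ∀ x, s(h x, k x) = s(f x, g x))
    (hf : Injective f) (hg : Injective g) (hh : Surjective h) : Injective k := by
  intro a b hab
  obtain ⟨c, hc⟩ := hh (k a)
  wlog hfc : h c = f c ∧ k c = g c generalizing f g
  · exact this (fun x => (hk x).trans Sym2.eq_swap) hg hf
      ((Sym2.eq_iff.mp (hk c)).resolve_left hfc)
  -- `h` already takes the value `h c` through `f`, so `k` can take it only through `g`.
  have eq_through_g : ∀ x, k x = h c → g x = h c := by
    intro x hx
    rcases Sym2.eq_iff.mp (hk x) with ⟨-, hkx⟩ | ⟨-, hkx⟩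
    · exact hkx.symm.trans hx
    · have hxc : x = c := hf (hkx.symm.trans (hx.trans hfc.1))
      rw [← hx, hxc, hfc.2]
  exact hg ((eq_through_g a hc.symm).trans (eq_through_g b (hab.symm.trans hc.symm)).symm)

theorem surjective_of_sym2_eq (hk : ∀ x, s(h x, k x) = s(f x, g x))
    (hf : Surjective f) (hg : Surjective g) (hh : Injective h) : Surjective k := by
  intro w
  obtain ⟨a, rfl⟩ := hf w
  obtain ⟨b, hb⟩ := hg (f a)
  rcases Sym2.eq_iff.mp (hk a) with ⟨hha, hka⟩ | ⟨-, hka⟩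
  · rcases Sym2.eq_iff.mp (hk b) with ⟨-, hkb⟩ | ⟨hhb, -⟩
    · exact ⟨b, hkb.trans hb⟩
    · have hab : a = b := hh (hha.trans (hb.symm.trans hhb.symm))
      exact ⟨a, by rw [hka, hab, hb, hab]⟩
  · exact ⟨a, hka⟩

theorem bijective_of_sym2_eq (hk : ∀ x, s(h x, k x) = s(f x, g x))
    (hf : Bijective f) (hg : Bijective g) (hh : Bijective h) : Bijective k :=
  ⟨injective_of_sym2_eq hk hf.injective hg.injective hh.surjective,
    surjective_of_sym2_eq hk hf.surjective hg.surjective hh.injective⟩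

end UnorderedPairs

theorem chiMap_add_chiMap_eq_of_sym2_eq {V : Type*} {f g h k : V → V}
    (hk : ∀ v, s(h v, k v) = s(f v, g v)) : chiMap f + chiMap g = chiMap h + chiMap k := by
  funext p
  simp only [Pi.add_apply, chiMap]
  rcases Sym2.eq_iff.mp (hk p.1) with ⟨hhp, hkp⟩ | ⟨hhp, hkp⟩
  · rw [hhp, hkp]
  · rw [hhp, hkp, add_comm]

theorem sym2_mk_ite_eq {β : Type*} [DecidableEq β] {a b c : β} (hc : c = a ∨ c = b) :
    s(c, if c = a then b else a) = s(a, b) := by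
  split_ifs with hca
  · rw [hca]
  · rw [hc.resolve_left hca, Sym2.eq_swap]

theorem stmt_7_general {V : Type*} (σ τ π : Equiv.Perm V)
    (hπ : ∀ v : V, π v = σ v ∨ π v = τ v) :
    Bijective (fun v : V => if π v = σ v then τ v else σ v) ∧
    chiMap ⇑σ + chiMap ⇑τ =
      chiMap ⇑π + chiMap (fun v : V => if π v = σ v then τ v else σ v) :=
  have same_pair (v : V) : s(π v, if π v = σ v then τ v else σ v) = s(σ v, τ v) :=
    sym2_mk_ite_eq (hπ v)
  ⟨bijective_of_sym2_eq same_pair σ.bijective τ.bijective π.bijective,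
    chiMap_add_chiMap_eq_of_sym2_eq same_pair⟩

theorem stmt_7 {V : Type*} [Fintype V] (σ τ π : Equiv.Perm V)
    (hπ : ∀ v : V, π v = σ v ∨ π v = τ v) :
    Function.Bijective (fun v : V => if π v = σ v then τ v else σ v) ∧
    chiMap ⇑σ + chiMap ⇑τ =
      chiMap ⇑π + chiMap (fun v : V => if π v = σ v then τ v else σ v) :=
  stmt_7_general σ τ π hπ
end

section
/- Let V be a finite type and let r : V → V → Prop be an arbitrary relation (the arc relation of a directed multigraph on V). Let B be the simple graph on the sum type V ⊕ V in which inl(u) is adjacent to inr(v) if and only if r u v holds, and there are no other adjacencies. Then a subgraph M of B is a perfect matching of B if and only if there exists a permutation σ of V such that r v (σ v) holds for every v and the edge set of M is exactly { s(inl v, inr (σ v)) : v ∈ V }. In particular, perfect matchings of B correspond exactly to vertex-disjoint directed cycle covers of the directed graph (V, r). -/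
/-- The bipartite simple graph on `V ⊕ V` associated with a relation `r : V → V → Prop`:
`Sum.inl u` is adjacent to `Sum.inr v` iff `r u v`, and there are no other adjacencies. -/
def bipartiteOfRel {V : Type*} (r : V → V → Prop) : SimpleGraph (V ⊕ V) :=
  SimpleGraph.fromRel (fun a b => ∃ u v : V, a = Sum.inl u ∧ b = Sum.inr v ∧ r u v)

/-!
A perfect matching of a bipartite graph on `α ⊕ β` pairs each vertex of either side with exactly one
vertex of the other, so it is the graph of a bijection `α ≃ β`. For `bipartiteOfRel r` both sides
are `V`, and the bijection is a permutation all of whose arcs lie in `r`.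
-/

theorem exists_equiv_iff_forall_existsUnique {α β : Sort*} {R : α → β → Prop} :
    (∃ σ : α ≃ β, ∀ a b, R a b ↔ σ a = b) ↔ (∀ a, ∃! b, R a b) ∧ ∀ b, ∃! a, R a b := by
  constructor
  · rintro ⟨σ, hσ⟩
    simp only [hσ]
    exact ⟨fun _ ↦ existsUnique_eq', σ.bijective.existsUnique⟩
  · rintro ⟨existsUnique_right, existsUnique_left⟩
    obtain ⟨f, hf⟩ := forall_existsUnique_iff.1 existsUnique_right
    have f_bijective : f.Bijective := by
      simpa only [Function.bijective_iff_existsUnique, hf] using existsUnique_left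
    exact ⟨.ofBijective f f_bijective, fun _ _ ↦ hf⟩

section Bipartite

variable {α β : Type*} {G : SimpleGraph (α ⊕ β)}

theorem not_adj_inl_inl_of_le_completeBipartiteGraph (hG : G ≤ completeBipartiteGraph α β)
    (M : G.Subgraph) (a a' : α) : ¬ M.Adj (.inl a) (.inl a') :=
  fun h ↦ by simpa using hG h.adj_sub

theorem not_adj_inr_inr_of_le_completeBipartiteGraph (hG : G ≤ completeBipartiteGraph α β)
    (M : G.Subgraph) (b b' : β) : ¬ M.Adj (.inr b) (.inr b') :=
  fun h ↦ by simpa using hG h.adj_sub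

theorem existsUnique_adj_inl_iff (hG : G ≤ completeBipartiteGraph α β) (M : G.Subgraph) (a : α) :
    (∃! w, M.Adj (.inl a) w) ↔ ∃! b, M.Adj (.inl a) (.inr b) := by
  simp [ExistsUnique, not_adj_inl_inl_of_le_completeBipartiteGraph hG]

theorem existsUnique_adj_inr_iff (hG : G ≤ completeBipartiteGraph α β) (M : G.Subgraph) (b : β) :
    (∃! w, M.Adj (.inr b) w) ↔ ∃! a, M.Adj (.inl a) (.inr b) := by
  simp [ExistsUnique, not_adj_inr_inr_of_le_completeBipartiteGraph hG, M.adj_comm (.inr b)]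

theorem isPerfectMatching_iff_exists_equiv (hG : G ≤ completeBipartiteGraph α β)
    (M : G.Subgraph) :
    M.IsPerfectMatching ↔ ∃ σ : α ≃ β, ∀ a b, M.Adj (.inl a) (.inr b) ↔ σ a = b := by
  rw [exists_equiv_iff_forall_existsUnique, SimpleGraph.Subgraph.isPerfectMatching_iff, Sum.forall]
  simp only [existsUnique_adj_inl_iff hG, existsUnique_adj_inr_iff hG]

theorem edgeSet_eq_iff_forall_adj_iff_apply_eq (hG : G ≤ completeBipartiteGraph α β)
    (M : G.Subgraph) (f : α → β) :
    M.edgeSet = {e | ∃ a, e = s(.inl a, .inr (f a))} ↔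
      ∀ a b, M.Adj (.inl a) (.inr b) ↔ f a = b := by
  constructor
  · intro hM a b
    rw [← SimpleGraph.Subgraph.mem_edgeSet, hM]
    simp [eq_comm]
  · intro hadj
    ext ⟨x, y⟩
    rcases x with a | b <;> rcases y with a' | b' <;>
      simp [not_adj_inl_inl_of_le_completeBipartiteGraph hG,
        not_adj_inr_inr_of_le_completeBipartiteGraph hG, M.adj_comm (.inr _), hadj, eq_comm]

theorem stmt_8_general (hG : G ≤ completeBipartiteGraph α β) (M : G.Subgraph) :
    M.IsPerfectMatching ↔
      ∃ σ : α ≃ β, (∀ a, G.Adj (.inl a) (.inr (σ a))) ∧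
        M.edgeSet = {e | ∃ a, e = s(.inl a, .inr (σ a))} := by
  simp only [isPerfectMatching_iff_exists_equiv hG, edgeSet_eq_iff_forall_adj_iff_apply_eq hG]
  refine exists_congr fun σ ↦ (and_iff_right_of_imp fun hσ a ↦ ?_).symm
  exact ((hσ a (σ a)).2 rfl).adj_sub

end Bipartite

section BipartiteOfRel

variable {V : Type*} (r : V → V → Prop)

theorem bipartiteOfRel_adj_inl_inr (u v : V) :
    (bipartiteOfRel r).Adj (.inl u) (.inr v) ↔ r u v := by
  simp [bipartiteOfRel]

theorem bipartiteOfRel_le_completeBipartiteGraph :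
    bipartiteOfRel r ≤ completeBipartiteGraph V V := by
  rintro (u | u) (v | v) <;> simp [bipartiteOfRel]

end BipartiteOfRel

theorem stmt_8 {V : Type*} [Fintype V] (r : V → V → Prop)
    (M : (bipartiteOfRel r).Subgraph) :
    M.IsPerfectMatching ↔
      ∃ σ : Equiv.Perm V, (∀ v : V, r v (σ v)) ∧
        M.edgeSet = {e : Sym2 (V ⊕ V) | ∃ v : V, e = s(Sum.inl v, Sum.inr (σ v))} := by
  simpa only [bipartiteOfRel_adj_inl_inr] using
    stmt_8_general (bipartiteOfRel_le_completeBipartiteGraph r) M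
end

section
/- Let V be a finite type with at least 3 elements and let H be a simple graph on V. Then H is connected and every vertex of V has degree 2 in H if and only if H contains a Hamiltonian cycle c (a closed walk visiting every vertex exactly once) whose set of edges is exactly the edge set of H. -/
open scoped Classical

/-!
In a finite graph of cycles every component is traversed by a single cycle, so connectedness makes
that cycle Hamiltonian. It exhausts the edges because it already uses two edges at each vertex.
Conversely, a cycle has exactly two edges at each vertex it visits, so a Hamiltonian cycle
containing all edges makes every degree two.
-/

section TwoRegular

open SimpleGraph

variable {V : Type*} {G : SimpleGraph V} {v w : V} {p : G.Walk v v}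

theorem ncard_neighborSet_eq_degree [Fintype (G.neighborSet v)] :
    (G.neighborSet v).ncard = G.degree v :=
  Set.ncard_eq_toFinset_card' _

theorem isCycles_of_isRegularOfDegree_two [LocallyFinite G] (hG : G.IsRegularOfDegree 2) :
    G.IsCycles :=
  fun v _ ↦ ncard_neighborSet_eq_degree.trans (hG v)

theorem isHamiltonianCycle_iff_isCycle_and_forall_mem_support [DecidableEq V] :
    p.IsHamiltonianCycle ↔ p.IsCycle ∧ ∀ w, w ∈ p.support := by
  refine ⟨fun hp ↦ ⟨hp.isCycle, hp.mem_support⟩, fun ⟨hp, hall⟩ ↦ ⟨hp, ?_⟩⟩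
  refine hp.isPath_tail.isHamiltonian_of_mem fun w ↦ ?_
  rw [p.support_tail_of_not_nil hp.not_nil]
  rcases p.mem_support_iff.mp (hall w) with rfl | hw
  · exact Walk.end_mem_tail_support hp.not_nil
  · exact hw

theorem exists_isHamiltonianCycle_of_connected_of_isCycles [Finite V] [Nontrivial V]
    [DecidableEq V] (hconn : G.Connected) (hcyc : G.IsCycles) (v : V) :
    ∃ p : G.Walk v v, p.IsHamiltonianCycle := by
  have hv : (G.neighborSet v).Nonempty := hconn.preconnected.exists_adj_of_nontrivial v
  obtain ⟨p, hp, hverts⟩ := hcyc.exists_cycle_toSubgraph_verts_eq_connectedComponentSupp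
    ConnectedComponent.connectedComponentMk_mem hv
  refine ⟨p, isHamiltonianCycle_iff_isCycle_and_forall_mem_support.mpr ⟨hp, fun w ↦ ?_⟩⟩
  rw [← p.mem_verts_toSubgraph, hverts]
  exact ConnectedComponent.sound (hconn w v)

theorem edgeSet_eq_of_isHamiltonianCycle_of_isCycles [DecidableEq V]
    (hp : p.IsHamiltonianCycle) (hcyc : G.IsCycles) : p.edgeSet = G.edgeSet := by
  have := hp.finite
  have : LocallyFinite G := fun _ ↦ Fintype.ofFinite _
  ext ⟨a, b⟩
  have ha : a ∈ p.toSubgraph.verts := p.mem_verts_toSubgraph.mpr (hp.mem_support a)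
  rw [← p.edgeSet_toSubgraph]
  exact hp.isCycle.adj_toSubgraph_iff_of_isCycles hcyc ha b

theorem degree_eq_two_of_isCycle_of_edgeSet_eq [Fintype (G.neighborSet w)]
    (hp : p.IsCycle) (hedges : p.edgeSet = G.edgeSet) (hw : w ∈ p.support) :
    G.degree w = 2 := by
  have hneighbors : p.toSubgraph.neighborSet w = G.neighborSet w := by
    ext x
    rw [Subgraph.mem_neighborSet, ← Subgraph.mem_edgeSet, p.edgeSet_toSubgraph, hedges,
      mem_edgeSet, mem_neighborSet]
  rw [← ncard_neighborSet_eq_degree, ← hneighbors]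
  exact hp.ncard_neighborSet_toSubgraph_eq_two hw

end TwoRegular

theorem stmt_10 {V : Type*} [Fintype V] (hV : 3 ≤ Fintype.card V) (H : SimpleGraph V) :
    (H.Connected ∧ ∀ v : V, H.degree v = 2) ↔
      ∃ (v : V) (c : H.Walk v v), c.IsHamiltonianCycle ∧
        {e : Sym2 V | e ∈ c.edges} = H.edgeSet := by
  constructor
  · rintro ⟨hconn, hdeg⟩
    have : Nontrivial V := Fintype.one_lt_card_iff_nontrivial.mp (by lia)
    have hcyc : H.IsCycles := isCycles_of_isRegularOfDegree_two hdeg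
    obtain ⟨v⟩ := hconn.nonempty
    obtain ⟨c, hc⟩ := exists_isHamiltonianCycle_of_connected_of_isCycles hconn hcyc v
    exact ⟨v, c, hc, edgeSet_eq_of_isHamiltonianCycle_of_isCycles hc hcyc⟩
  · rintro ⟨v, c, hc, hedges⟩
    have hHam : H.IsHamiltonian := fun _ ↦ ⟨v, c, hc⟩
    exact ⟨hHam.connected,
      fun w ↦ degree_eq_two_of_isCycle_of_edgeSet_eq hc.isCycle hedges (hc.mem_support w)⟩
end
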